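/- arXiv:0710.5848 — 4 statements merged into one kernel-verified Lean document; each statement's English description precedes it below -/
import Mathlib

section
/- Let 0 < κ < κ_c. Then λ = 0 is the unique global minimizer of φ_κ on [0,∞): φ_κ(0) = κ and φ_κ(λ) > κ for every λ > 0. -/
/-!
With `s = √λ` one has `φ_κ(λ) - κ = s (1 - κ s (2 - s²))`, so the claim is `κ s (2 - s²) < 1` for
`s > 0`. On `s > 0` the cubic `s (2 - s²)` is maximal at `r = √(2/3)`, with value `4r/3`, and
`κ_c` is exactly the reciprocal of this maximum (`kappaC_mul`).
-/

/-- `φ_κ(λ) = κ(1−λ)² + √λ`. -/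
noncomputable def phi (κ l : ℝ) : ℝ := κ * (1 - l) ^ 2 + Real.sqrt l

/-- `κ_c = (1/2)(3/2)^{3/2}`. -/
noncomputable def kappaC : ℝ := (1 / 2) * (3 / 2 : ℝ) ^ ((3 : ℝ) / 2)

lemma kappaC_mul : kappaC * (4 / 3 * Real.sqrt (2 / 3)) = 1 := by
  have h : (3 / 2 : ℝ) ^ ((3 : ℝ) / 2) = 3 / 2 * Real.sqrt (3 / 2) := by
    rw [show (3 : ℝ) / 2 = 1 + 1 / 2 by norm_num, Real.rpow_add (by norm_num), Real.rpow_one,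
      ← Real.sqrt_eq_rpow]
  have h2 : Real.sqrt (3 / 2) * Real.sqrt (2 / 3) = 1 := by
    rw [← Real.sqrt_mul (by norm_num)]
    norm_num
  rw [kappaC, h]
  linear_combination h2

/-- For `0 < κ < κ_c`, `λ = 0` is the unique global minimizer of `φ_κ` on `[0,∞)`:
`φ_κ(0) = κ` and `φ_κ(λ) > κ` for every `λ > 0`. -/
theorem stmt_0 (κ : ℝ) (h0 : 0 < κ) (h1 : κ < kappaC) :
    phi κ 0 = κ ∧ ∀ l : ℝ, 0 < l → κ < phi κ l := by
  have hr : Real.sqrt (2 / 3) ^ 2 = 2 / 3 := Real.sq_sqrt (by norm_num)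
  have hr0 : 0 < Real.sqrt (2 / 3) := Real.sqrt_pos.2 (by norm_num)
  refine ⟨by simp [phi], fun l hl => ?_⟩
  have hs : 0 < Real.sqrt l := Real.sqrt_pos.2 hl
  have hsl : Real.sqrt l ^ 2 = l := Real.sq_sqrt hl.le
  have hk : κ * (4 / 3 * Real.sqrt (2 / 3)) < 1 := by
    rw [← kappaC_mul]
    exact mul_lt_mul_of_pos_right h1 (by positivity)
  unfold phi
  generalize Real.sqrt (2 / 3) = r at *
  generalize Real.sqrt l = s at *
  subst hsl
  -- `2s - s³ = 4r/3 - (s - r)²(s + 2r)` because `r² = 2/3`.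
  have hmax : s * (2 - s ^ 2) ≤ 4 / 3 * r := by
    have h : 0 ≤ (s - r) ^ 2 * (s + 2 * r) := by positivity
    have e : (s - r) ^ 2 * (s + 2 * r) = 4 / 3 * r - s * (2 - s ^ 2) := by
      linear_combination (2 * r - 3 * s) * hr
    linarith
  have hlt : κ * (s * (2 - s ^ 2)) < 1 :=
    (mul_le_mul_of_nonneg_left hmax h0.le).trans_lt hk
  have hpos : 0 < s * (1 - κ * (s * (2 - s ^ 2))) := mul_pos hs (by linarith)
  linarith
end

section
/- Let κ = κ_c. Then φ_{κ_c} has exactly two global minimizers on [0,∞), namely 0 and 2/3: one has φ_{κ_c}(2/3) = φ_{κ_c}(0) = κ_c, and φ_{κ_c}(λ) > κ_c for every λ ∈ [0,∞) with λ ≠ 0 and λ ≠ 2/3. -/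
lemma kappaC_eq : kappaC = 9 / 8 * Real.sqrt (2 / 3) := by
  have h1 : (3 / 2 : ℝ) ^ ((3 : ℝ) / 2) = 3 / 2 * Real.sqrt (3 / 2) := by
    rw [show (3 : ℝ) / 2 = 1 + 1 / 2 by norm_num,
      Real.rpow_add (by norm_num), Real.rpow_one, Real.sqrt_eq_rpow]
  have h2 : Real.sqrt (3 / 2) = 3 / 2 * Real.sqrt (2 / 3) := by
    rw [show (3 / 2 : ℝ) = (3 / 2) ^ 2 * (2 / 3) by norm_num,
      Real.sqrt_mul (by norm_num), Real.sqrt_sq (by norm_num)]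
    norm_num
  rw [kappaC, h1, h2]
  ring

lemma phi_kappaC_sub {l : ℝ} (hl : 0 ≤ l) :
    phi kappaC l - kappaC =
      kappaC * Real.sqrt l * (Real.sqrt l - Real.sqrt (2 / 3)) ^ 2 *
        (Real.sqrt l + 2 * Real.sqrt (2 / 3)) := by
  have ht : Real.sqrt l ^ 2 = l := Real.sq_sqrt hl
  have hs : Real.sqrt (2 / 3) ^ 2 = 2 / 3 := Real.sq_sqrt (by norm_num)
  rw [kappaC_eq, phi]
  set t := Real.sqrt l
  set s := Real.sqrt (2 / 3)
  rw [← ht]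
  -- The remaining discrepancy is a multiple of `s ^ 2 - 2 / 3`.
  linear_combination (27 / 8 * s * t ^ 2 - 9 / 4 * t * (s ^ 2 + 2 / 3)) * hs

/-- At `κ = κ_c`, the function `φ_{κ_c}` has exactly two global minimizers on `[0,∞)`,
namely `0` and `2/3`: `φ_{κ_c}(2/3) = φ_{κ_c}(0) = κ_c`, and `φ_{κ_c}(λ) > κ_c` for every
`λ ∈ [0,∞)` with `λ ≠ 0`, `λ ≠ 2/3`. -/
theorem stmt_1 :
    phi kappaC (2 / 3) = kappaC ∧ phi kappaC 0 = kappaC ∧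
      ∀ l : ℝ, 0 ≤ l → l ≠ 0 → l ≠ 2 / 3 → kappaC < phi kappaC l := by
  refine ⟨?_, ?_, fun l hl h0 h23 => ?_⟩
  · have h := phi_kappaC_sub (l := 2 / 3) (by norm_num)
    rw [sub_self] at h
    linarith
  · simp [phi]
  · have ht : 0 < Real.sqrt l := Real.sqrt_pos.2 (lt_of_le_of_ne hl h0.symm)
    have hs : 0 < Real.sqrt (2 / 3) := Real.sqrt_pos.2 (by norm_num)
    have hne : Real.sqrt l - Real.sqrt (2 / 3) ≠ 0 := fun h =>
      h23 ((Real.sqrt_inj hl (by norm_num)).1 (sub_eq_zero.1 h))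
    have hk : 0 < kappaC := by rw [kappaC_eq]; positivity
    rw [← sub_pos, phi_kappaC_sub hl]
    positivity
end

section
/- For every κ > 0 the function φ_κ attains a minimum on [0,∞), and min_{λ ≥ 0} φ_κ(λ) = κ if and only if κ ≤ κ_c; moreover min_{λ ≥ 0} φ_κ(λ) < κ if and only if κ > κ_c. -/
lemma phi_zero (κ : ℝ) : phi κ 0 = κ := by simp [phi]

lemma phi_sq (κ : ℝ) {s : ℝ} (hs : 0 ≤ s) :
    phi κ (s ^ 2) = κ + s * (1 - κ * (2 * s - s ^ 3)) := by
  rw [phi, Real.sqrt_sq hs]; ring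

/-- The maximiser `r = √(2/3)` of `2 s - s³`, with `κ_c` expressed as the reciprocal of the
maximal value `(4/3) r`. -/
lemma exists_maximiser : ∃ r : ℝ, 0 < r ∧ r ^ 2 = 2 / 3 ∧ kappaC * (4 / 3 * r) = 1 := by
  refine ⟨Real.sqrt (2 / 3), by positivity, Real.sq_sqrt (by norm_num), ?_⟩
  have h1 : (3 / 2 : ℝ) ^ ((3 : ℝ) / 2) = 3 / 2 * Real.sqrt (3 / 2) := by
    rw [show (3 : ℝ) / 2 = 1 + 1 / 2 by norm_num, Real.rpow_add (by norm_num), Real.rpow_one,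
      Real.sqrt_eq_rpow]
  have h2 : Real.sqrt (3 / 2) * Real.sqrt (2 / 3) = 1 := by
    rw [← Real.sqrt_mul (by norm_num)]; norm_num
  rw [kappaC, h1]
  linear_combination h2

lemma le_phi {κ : ℝ} (h0 : 0 < κ) (h : κ ≤ kappaC) {l : ℝ} (hl : 0 ≤ l) : κ ≤ phi κ l := by
  obtain ⟨r, hr, hr2, hk⟩ := exists_maximiser
  have hs := Real.sqrt_nonneg l
  rw [← Real.sq_sqrt hl, phi_sq κ hs]
  generalize Real.sqrt l = s at hs
  have h1 : 2 * s - s ^ 3 ≤ 4 / 3 * r := by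
    have : 0 ≤ (s - r) ^ 2 * (s + 2 * r) := by positivity
    have e : (s - r) ^ 2 * (s + 2 * r) = 4 / 3 * r - (2 * s - s ^ 3) := by
      linear_combination (2 * r - 3 * s) * hr2
    linarith
  have h2 : κ * (2 * s - s ^ 3) ≤ 1 :=
    calc κ * (2 * s - s ^ 3) ≤ κ * (4 / 3 * r) := by gcongr
      _ ≤ kappaC * (4 / 3 * r) := by gcongr
      _ = 1 := hk
  have h3 : 0 ≤ s * (1 - κ * (2 * s - s ^ 3)) := mul_nonneg hs (by linarith)
  linarith

lemma exists_phi_lt {κ : ℝ} (h : kappaC < κ) : ∃ l : ℝ, 0 ≤ l ∧ phi κ l < κ := by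
  obtain ⟨r, hr, hr2, hk⟩ := exists_maximiser
  refine ⟨r ^ 2, by positivity, ?_⟩
  rw [phi_sq κ hr.le]
  have e : 2 * r - r ^ 3 = 4 / 3 * r := by linear_combination -r * hr2
  have h1 : kappaC * (4 / 3 * r) < κ * (4 / 3 * r) := by gcongr
  rw [e]
  have := mul_pos hr (by linarith : 0 < κ * (4 / 3 * r) - 1)
  linarith

lemma exists_isLeast {κ : ℝ} (h0 : 0 < κ) : ∃ m : ℝ, IsLeast (phi κ '' Set.Ici 0) m := by
  have hc : Continuous (phi κ) := by unfold phi; fun_prop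
  obtain ⟨x, hx, hmin⟩ := (isCompact_Icc (a := (0 : ℝ)) (b := 2)).exists_isMinOn
    ⟨0, by simp⟩ hc.continuousOn
  refine ⟨phi κ x, ⟨x, hx.1, rfl⟩, ?_⟩
  rintro _ ⟨l, hl, rfl⟩
  rcases le_total l 2 with h | h
  · exact hmin ⟨hl, h⟩
  · have h1 : phi κ x ≤ phi κ 0 := hmin (by simp)
    have h2 : κ * 1 ≤ κ * (1 - l) ^ 2 := by gcongr; nlinarith
    rw [phi_zero] at h1
    have := Real.sqrt_nonneg l
    change phi κ x ≤ κ * (1 - l) ^ 2 + Real.sqrt l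
    linarith

/-- For every `κ > 0` the function `φ_κ` attains a minimum on `[0,∞)`, and this minimum
equals `κ` iff `κ ≤ κ_c`, while it is `< κ` iff `κ > κ_c`. -/
theorem stmt_4 (κ : ℝ) (h0 : 0 < κ) :
    ∃ m : ℝ, IsLeast (phi κ '' Set.Ici 0) m ∧ (m = κ ↔ κ ≤ kappaC) ∧ (m < κ ↔ kappaC < κ) := by
  obtain ⟨m, hm⟩ := exists_isLeast h0
  have hle : m ≤ κ := hm.2 ⟨0, Set.self_mem_Ici, phi_zero κ⟩
  have hlt : m < κ ↔ kappaC < κ := by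
    constructor
    · intro h
      by_contra! hk
      obtain ⟨l, hl, rfl⟩ := hm.1
      exact absurd (le_phi h0 hk hl) (not_le.mpr h)
    · intro h
      obtain ⟨l, hl, hlt⟩ := exists_phi_lt h
      exact (hm.2 ⟨l, hl, rfl⟩).trans_lt hlt
  refine ⟨m, hm, ?_, hlt⟩
  rw [← not_lt, ← hlt, not_lt]
  exact ⟨fun h => h.ge, fun h => le_antisymm hle h⟩
end

section
/- Let C be a countable set ('contours'), w : C → (0,∞) a weight function, and ~ a symmetric relation on C ('compatibility'). Call a finitely supported function Γ : C → ℕ a consistent family if γ ~ γ' for any two distinct elements γ, γ' of the support of Γ, and set W(Γ) = ∏_γ w(γ)^{Γ(γ)}. Assume Z = Σ_{Γ consistent} W(Γ) < ∞, and define the probability measure Pr(Γ) = W(Γ)/Z on consistent families. Then for every γ₀ ∈ C and every integer k ≥ 1, Pr( {Γ : Γ(γ₀) ≥ k} ) ≤ w(γ₀)^k. In particular, with w(γ) = e^{−β|γ|} this yields the Peierls estimate: the probability that a given contour γ appears at least k times in the random family is at most e^{−kβ|γ|}. -/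
/-! Removing `k` copies of `γ₀` maps the families with `Γ γ₀ ≥ k` injectively into the consistent
families, since removal only shrinks the support, and it divides the weight by `w γ₀ ^ k`.
Hence the sum over the event is `w γ₀ ^ k` times a subsum of the nonnegative series `Z`. -/

/-- A finitely supported multiplicity function `Γ : C →₀ ℕ` is a consistent family if any
two distinct contours of its support are compatible. -/
def Consistent {C : Type*} (compat : C → C → Prop) (Γ : C →₀ ℕ) : Prop :=
  ∀ γ ∈ Γ.support, ∀ γ' ∈ Γ.support, γ ≠ γ' → compat γ γ'

/-- The weight `W(Γ) = ∏_γ w(γ)^{Γ(γ)}` of a family of contours. -/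
noncomputable def famWeight {C : Type*} (w : C → ℝ) (Γ : C →₀ ℕ) : ℝ :=
  ∏ γ ∈ Γ.support, w γ ^ Γ γ

lemma famWeight_eq_prod {C : Type*} (w : C → ℝ) (Γ : C →₀ ℕ) :
    famWeight w Γ = Γ.prod fun γ n => w γ ^ n := rfl

lemma famWeight_add_single {C : Type*} (w : C → ℝ) (Γ : C →₀ ℕ) (γ₀ : C) (k : ℕ) :
    famWeight w (Γ + Finsupp.single γ₀ k) = w γ₀ ^ k * famWeight w Γ := by
  classical
  simp only [famWeight_eq_prod]
  rw [Finsupp.prod_add_index' (fun _ => pow_zero _) (fun _ _ _ => pow_add _ _ _),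
    Finsupp.prod_single_index (h := fun γ n => w γ ^ n) (pow_zero _), mul_comm]

lemma famWeight_pos {C : Type*} {w : C → ℝ} (hw : ∀ γ, 0 < w γ) (Γ : C →₀ ℕ) :
    0 < famWeight w Γ :=
  Finset.prod_pos fun γ _ => pow_pos (hw γ) _

lemma Consistent.mono {C : Type*} {compat : C → C → Prop} {Γ Γ' : C →₀ ℕ}
    (h : Consistent compat Γ) (hle : Γ' ≤ Γ) : Consistent compat Γ' :=
  fun γ hγ γ' hγ' => h γ (Finsupp.support_mono hle hγ) γ' (Finsupp.support_mono hle hγ')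

/-- Peierls estimate in the abstract contour ensemble: if the total partition function
`Z = Σ_{Γ consistent} W(Γ)` is finite, then the probability that a given contour `γ₀`
appears with multiplicity at least `k ≥ 1` is bounded by `w(γ₀)^k`. -/
theorem stmt_10 {C : Type*} [Countable C] (w : C → ℝ) (hw : ∀ γ, 0 < w γ)
    (compat : C → C → Prop) (hsymm : Symmetric compat)
    (hZ : Summable fun Γ : {Γ : C →₀ ℕ // Consistent compat Γ} => famWeight w Γ.1)
    (γ₀ : C) (k : ℕ) (hk : 1 ≤ k) :
    (∑' Γ : {Γ : C →₀ ℕ // Consistent compat Γ ∧ k ≤ Γ γ₀}, famWeight w Γ.1) /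
      (∑' Γ : {Γ : C →₀ ℕ // Consistent compat Γ}, famWeight w Γ.1) ≤ w γ₀ ^ k := by
  have hadd (Γ : {Γ : C →₀ ℕ // Consistent compat Γ ∧ k ≤ Γ γ₀}) :
      Γ.1 - Finsupp.single γ₀ k + Finsupp.single γ₀ k = Γ.1 :=
    tsub_add_cancel_of_le (Finsupp.single_le_iff.2 Γ.2.2)
  let φ : {Γ : C →₀ ℕ // Consistent compat Γ ∧ k ≤ Γ γ₀} → {Γ : C →₀ ℕ // Consistent compat Γ} :=
    fun Γ => ⟨Γ.1 - Finsupp.single γ₀ k, Γ.2.1.mono tsub_le_self⟩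
  have hφ : Function.Injective φ := by
    intro Γ Γ' h
    have h' : Γ.1 - Finsupp.single γ₀ k = Γ'.1 - Finsupp.single γ₀ k := congrArg Subtype.val h
    apply Subtype.ext
    rw [← hadd Γ, h', hadd Γ']
  have hweight (Γ : {Γ : C →₀ ℕ // Consistent compat Γ ∧ k ≤ Γ γ₀}) :
      famWeight w Γ.1 = w γ₀ ^ k * famWeight w (φ Γ).1 := by
    rw [← famWeight_add_single, hadd Γ]
  refine div_le_of_le_mul₀ (tsum_nonneg fun Γ => (famWeight_pos hw Γ.1).le)
    (pow_pos (hw γ₀) k).le ?_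
  rw [tsum_congr hweight, tsum_mul_left]
  exact mul_le_mul_of_nonneg_left
    (tsum_comp_le_tsum_of_inj hZ (fun Γ => (famWeight_pos hw Γ.1).le) hφ)
    (pow_pos (hw γ₀) k).le
end
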